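/- Let P ⊂ ℝ^n be a full-dimensional simple lattice polytope, φ : ℝ^n → ℂ a homogeneous polynomial function of degree d, q a positive integer, and y a real number. Then Σ_{F face of P} (y+1)^{dim F} (−y)^{n − dim F} · Σ_{m ∈ ℤ^n ∩ qF} φ(m) = Σ_{F face of P} (y+1)^{dim F} · Σ_{m ∈ ℤ^n ∩ relint(qF)} φ(m), where both sums run over all faces of P including P itself. -/

import Mathlib

/-!
Both sides are sums over the lattice points `m` of `q • P`, so it suffices to compare, for each point
`x = m / q` of `P`, the coefficients of `φ m`. Let `E` be the smallest face containing `x`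
(`exists_minimal_face`). Then `E` is the only face with `x` in its relative interior
(`eq_of_mem_intrinsicInterior`, `mem_intrinsicInterior_of_minimal`), and the faces containing `x` are
the faces containing `E`. The claim becomes
`∑_{F ⊇ E} (y + 1) ^ dim F * (-y) ^ (n - dim F) = (y + 1) ^ dim E`.

Choose a vertex `v` of `P` in `E`. Since `v` lies on exactly `n` edges, the cone spanned by `P - v` is
generated by a basis of edge directions (`exists_edge_basis`). In the corresponding coordinates at
`v` the faces through `v` are exactly the loci where a given set of coordinates vanishes, so they
correspond to subsets `I` of the basis, with dimension `|I|` and order given by inclusion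
(`exists_eq_coordFace`, `faceDim_coordFace`, `coordFace_subset_iff`). The sum over `F ⊇ E` is then a
sum over sets `I` containing a fixed one, evaluated by the binomial theorem with
`(y + 1) + (-y) = 1` (`sum_faces_above`).
-/
open scoped Pointwise Classical
open MeasureTheory Polynomial

noncomputable section

/-- The real vector corresponding to an integer vector in `ℤ^n ⊂ ℝ^n`. -/
def intVec {n : ℕ} (m : Fin n → ℤ) : Fin n → ℝ := fun i => (m i : ℝ)

/-- `F` is a face of the polytope `P`: either `P` itself or a nonempty set of maximizers
over `P` of a linear functional. -/
def IsFaceOf {n : ℕ} (P F : Set (Fin n → ℝ)) : Prop :=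
  F = P ∨ (F.Nonempty ∧ ∃ u : (Fin n → ℝ) →ₗ[ℝ] ℝ,
    F = {x | x ∈ P ∧ ∀ p ∈ P, u p ≤ u x})

/-- The dimension of (the affine span of) a face. -/
noncomputable def faceDim {n : ℕ} (F : Set (Fin n → ℝ)) : ℕ :=
  Module.finrank ℝ (affineSpan ℝ F).direction

/-- A polytope `P ⊂ ℝ^n` is simple if every vertex (`0`-dimensional face) lies on
exactly `n` edges (`1`-dimensional faces). -/
def IsSimple {n : ℕ} (P : Set (Fin n → ℝ)) : Prop :=
  ∀ v, IsFaceOf P v → faceDim v = 0 →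
    {E | IsFaceOf P E ∧ faceDim E = 1 ∧ v ⊆ E}.ncard = n


/-! ### Faces as maximizer sets, and vertices of a polytope -/

/-- The set of maximizers of the linear functional `u` over `P`. -/
def maxFace {n : ℕ} (P : Set (Fin n → ℝ)) (u : (Fin n → ℝ) →ₗ[ℝ] ℝ) : Set (Fin n → ℝ) :=
  {x | x ∈ P ∧ ∀ p ∈ P, u p ≤ u x}

/-- `P` itself is the set of maximizers of the zero functional, so that the first alternative in
the definition of a face needs no separate treatment. -/
lemma isFaceOf_iff {n : ℕ} {P : Set (Fin n → ℝ)} (hne : P.Nonempty) {F : Set (Fin n → ℝ)} :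
    IsFaceOf P F ↔ F.Nonempty ∧ ∃ u, F = maxFace P u := by
  constructor
  · rintro (rfl | h)
    · exact ⟨hne, 0, by ext x; simp [maxFace]⟩
    · exact h
  · exact Or.inr

lemma isFaceOf_maxFace {n : ℕ} {P : Set (Fin n → ℝ)} {u : (Fin n → ℝ) →ₗ[ℝ] ℝ}
    {x : Fin n → ℝ} (hx : x ∈ maxFace P u) : IsFaceOf P (maxFace P u) :=
  Or.inr ⟨⟨x, hx⟩, u, rfl⟩

lemma IsFaceOf.subset {n : ℕ} {P F : Set (Fin n → ℝ)} (h : IsFaceOf P F) : F ⊆ P := by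
  rcases h with rfl | ⟨-, u, rfl⟩
  · exact subset_rfl
  · exact fun x hx => hx.1

/-- If `x` belongs to a maximizer set, the latter is a level set of the functional. -/
lemma maxFace_eq {n : ℕ} {P : Set (Fin n → ℝ)} {u : (Fin n → ℝ) →ₗ[ℝ] ℝ}
    {x : Fin n → ℝ} (hx : x ∈ maxFace P u) : maxFace P u = {z | z ∈ P ∧ u z = u x} := by
  ext z
  constructor
  · rintro ⟨hz, h⟩
    exact ⟨hz, le_antisymm (hx.2 z hz) (h x hx.1)⟩
  · rintro ⟨hz, h⟩
    exact ⟨hz, fun p hp => h ▸ hx.2 p hp⟩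

lemma le_of_mem_convexHull {n : ℕ} {W : Set (Fin n → ℝ)} {u : (Fin n → ℝ) →ₗ[ℝ] ℝ} {c : ℝ}
    (h : ∀ s ∈ W, u s ≤ c) {x : Fin n → ℝ} (hx : x ∈ convexHull ℝ W) : u x ≤ c :=
  convexHull_min (t := {z | u z ≤ c}) h (convex_halfSpace_le u.isLinear c) hx

lemma IsFaceOf.convex {n : ℕ} {P F : Set (Fin n → ℝ)} (hP : Convex ℝ P) (h : IsFaceOf P F) :
    Convex ℝ F := by
  rcases h with rfl | ⟨⟨x, hx⟩, u, rfl⟩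
  · exact hP
  · have := maxFace_eq (P := P) (u := u) hx
    rw [maxFace] at this
    rw [this]
    exact hP.inter (convex_hyperplane u.isLinear _)

/-- A polytope is the convex hull of finitely many points each of which is the unique maximizer of
some functional: take a minimal generating set and separate each generator from the hull of the
others. -/
lemma exists_exposed_generators {n : ℕ} (W : Finset (Fin n → ℝ)) :
    ∃ T ⊆ W, convexHull ℝ (T : Set (Fin n → ℝ)) = convexHull ℝ (W : Set (Fin n → ℝ)) ∧
      ∀ t ∈ T, ∃ a : (Fin n → ℝ) →ₗ[ℝ] ℝ, ∀ t' ∈ T, t' ≠ t → a t' < a t := by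
  induction W using Finset.strongInduction with
  | H W ih =>
    by_cases h : ∃ t ∈ W, t ∈ convexHull ℝ ((W.erase t : Finset _) : Set (Fin n → ℝ))
    · obtain ⟨t, htW, ht⟩ := h
      obtain ⟨T, hTW, hT, hT'⟩ := ih _ (Finset.erase_ssubset htW)
      refine ⟨T, hTW.trans (Finset.erase_subset _ _), hT.trans ?_, hT'⟩
      apply subset_antisymm
      · exact convexHull_mono (by exact_mod_cast Finset.erase_subset _ _)
      · refine convexHull_min (fun s hs => ?_) (convex_convexHull _ _)
        by_cases hst : s = t
        · exact hst ▸ ht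
        · exact subset_convexHull _ _ (by exact_mod_cast Finset.mem_erase.2 ⟨hst, hs⟩)
    · push Not at h
      refine ⟨W, subset_rfl, rfl, fun t ht => ?_⟩
      obtain ⟨f, u, hf, hu⟩ := geometric_hahn_banach_closed_point (convex_convexHull ℝ _)
        ((W.erase t).finite_toSet.isCompact_convexHull ℝ).isClosed (h t ht)
      refine ⟨f.toLinearMap, fun t' ht' hne => (hf t' ?_).trans hu⟩
      exact subset_convexHull _ _ (by exact_mod_cast Finset.mem_erase.2 ⟨hne, ht'⟩)

/-- Every face of a polytope contains a vertex, given here with a functional minimized only there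
among the generators. -/
lemma exists_vertex_mem_face {n : ℕ} {W : Finset (Fin n → ℝ)} {F : Set (Fin n → ℝ)}
    (hF : IsFaceOf (convexHull ℝ (W : Set (Fin n → ℝ))) F) (hFne : F.Nonempty) :
    ∃ T : Finset (Fin n → ℝ),
      convexHull ℝ (T : Set (Fin n → ℝ)) = convexHull ℝ (W : Set (Fin n → ℝ)) ∧
      ∃ v ∈ T, v ∈ F ∧ ∃ h : (Fin n → ℝ) →ₗ[ℝ] ℝ, ∀ s ∈ T, s ≠ v → h v < h s := by
  obtain ⟨T, -, hT, hT'⟩ := exists_exposed_generators W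
  rw [isFaceOf_iff (hFne.mono hF.subset)] at hF
  obtain ⟨⟨x, hx⟩, u, rfl⟩ := hF
  refine ⟨T, hT, ?_⟩
  rw [← hT] at hx ⊢
  have hTne : T.Nonempty := by
    rw [← Finset.coe_nonempty, ← convexHull_nonempty_iff (𝕜 := ℝ)]
    exact ⟨x, hx.1⟩
  obtain ⟨v, hv, hmax⟩ := T.exists_max_image u hTne
  obtain ⟨a, ha⟩ := hT' v hv
  refine ⟨v, hv, ⟨subset_convexHull _ _ hv, fun p hp => le_of_mem_convexHull hmax hp⟩, -a, ?_⟩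
  intro s hs hsv
  simpa using ha s hs hsv

/-! ### Relative interiors and minimal faces -/

/-- A point of a convex set outside the relative interior has a supporting functional that is not
constant on the set. -/
lemma exists_support {n : ℕ} {K : Set (Fin n → ℝ)} (hK : Convex ℝ K) {x : Fin n → ℝ}
    (hx : x ∈ K) (hx' : x ∉ intrinsicInterior ℝ K) :
    ∃ a : (Fin n → ℝ) →ₗ[ℝ] ℝ, (∀ z ∈ K, a z ≤ a x) ∧ ∃ z ∈ K, a z < a x := by
  have hne : Nonempty K := ⟨⟨x, hx⟩⟩
  obtain ⟨z, hz⟩ := Set.Nonempty.intrinsicInterior hK ⟨x, hx⟩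
  rw [mem_intrinsicInterior] at hz hx'
  obtain ⟨z', hz', rfl⟩ := hz
  push Not at hx'
  let x' : affineSpan ℝ K := ⟨x, subset_affineSpan _ _ hx⟩
  let e := (AffineIsometryEquiv.vaddConst ℝ x').toHomeomorph
  let K' : Set (affineSpan ℝ K).direction := e ⁻¹' ((↑) ⁻¹' K)
  have heq : ∀ w, ((e w : affineSpan ℝ K) : Fin n → ℝ) = (w : Fin n → ℝ) + x := fun w => rfl
  have hint : interior K' = e ⁻¹' interior ((↑) ⁻¹' K) := (e.preimage_interior _).symm
  have hK' : Convex ℝ K' := by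
    have : K' = ((affineSpan ℝ K).direction.subtype) ⁻¹' ((fun w => w + x) ⁻¹' K) := rfl
    rw [this]
    exact (hK.translate_preimage_left x).linear_preimage _
  have h0 : (0 : (affineSpan ℝ K).direction) ∉ interior K' := by
    rw [hint]
    intro h
    refine hx' _ h ?_
    rw [heq]; simp
  have hzint : e.symm z' ∈ interior K' := by
    rw [hint]; simpa using hz'
  obtain ⟨f, hf⟩ := geometric_hahn_banach_open_point hK'.interior isOpen_interior h0
  obtain ⟨a, ha⟩ := LinearMap.exists_extend f.toLinearMap
  have ha' : ∀ w : (affineSpan ℝ K).direction, a w = f w := fun w => by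
    have := LinearMap.congr_fun ha w
    simpa using this
  have key : ∀ y : affineSpan ℝ K, a y - a x = f (e.symm y) := fun y => by
    rw [← ha', ← map_sub]
    congr 1
  refine ⟨a, fun y hy => ?_, z',
    (interior_subset hz' : z' ∈ ((↑) ⁻¹' K : Set (affineSpan ℝ K))), ?_⟩
  · have hy' : e.symm ⟨y, subset_affineSpan _ _ hy⟩ ∈ closure (interior K') := by
      rw [hK'.closure_interior_eq_closure_of_nonempty_interior ⟨_, hzint⟩]
      apply subset_closure
      simpa [K'] using hy
    have : f (e.symm ⟨y, subset_affineSpan _ _ hy⟩) ≤ 0 := by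
      refine closure_minimal (t := {w | f w ≤ 0}) (fun w hw => ?_)
        (isClosed_le f.continuous continuous_const) hy'
      simpa using (hf w hw).le
    rw [← key] at this
    simpa using this
  · have := hf _ hzint
    rw [← key] at this
    simpa using this

/-- A functional maximized over `K` at a relatively interior point is constant on `K`. -/
lemma eq_of_mem_intrinsicInterior {n : ℕ} {K : Set (Fin n → ℝ)} {x z : Fin n → ℝ}
    (hx : x ∈ intrinsicInterior ℝ K) (hz : z ∈ K) {u : (Fin n → ℝ) →ₗ[ℝ] ℝ}
    (hu : ∀ y ∈ K, u y ≤ u x) : u z = u x := by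
  rw [mem_intrinsicInterior] at hx
  obtain ⟨x', hx', rfl⟩ := hx
  let z' : affineSpan ℝ K := ⟨z, subset_affineSpan _ _ hz⟩
  have : Nonempty (affineSpan ℝ K) := ⟨z'⟩
  let g : ℝ → affineSpan ℝ K := fun t => AffineMap.lineMap z' x' t
  have hg : Continuous g := AffineMap.lineMap_continuous
  have h1 : g 1 ∈ interior ((↑) ⁻¹' K) := by
    simpa only [g, AffineMap.lineMap_apply_one]
  -- the segment from `z` to `x` can be prolonged slightly beyond `x` inside `K`
  have hev : ∀ᶠ t in nhds (1 : ℝ), g t ∈ interior ((↑) ⁻¹' K) :=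
    hg.continuousAt.eventually (isOpen_interior.mem_nhds h1)
  obtain ⟨t, ht, ht1⟩ := ((hev.filter_mono nhdsWithin_le_nhds).and
    (self_mem_nhdsWithin : Set.Ioi (1 : ℝ) ∈ nhdsWithin 1 (Set.Ioi 1))).exists
  have hgt : ((g t : affineSpan ℝ K) : Fin n → ℝ) = t • ((x' : Fin n → ℝ) - z) + z := by
    simp [g, AffineMap.lineMap_apply, z']
  have h2 := hu _ (interior_subset ht : g t ∈ ((↑) ⁻¹' K : Set (affineSpan ℝ K)))
  rw [hgt, map_add, map_smul, map_sub, smul_eq_mul] at h2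
  have h3 := hu z hz
  have ht1' : 1 < t := ht1
  nlinarith

/-- A point lying in a face `E` of a polytope, and in no face not containing `E`, is relatively
interior to `E`. A functional supporting `E` at the point, perturbed by a large multiple of one
that defines `E`, would cut out a face not containing `E`. -/
lemma mem_intrinsicInterior_of_minimal {n : ℕ} {W : Finset (Fin n → ℝ)} {E : Set (Fin n → ℝ)}
    {x : Fin n → ℝ} (hE : IsFaceOf (convexHull ℝ (W : Set (Fin n → ℝ))) E) (hx : x ∈ E)
    (hmin : ∀ F, IsFaceOf (convexHull ℝ (W : Set (Fin n → ℝ))) F → x ∈ F → E ⊆ F) :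
    x ∈ intrinsicInterior ℝ E := by
  by_contra hcon
  obtain ⟨a, ha, z, hz, hzx⟩ := exists_support (hE.convex (convex_convexHull _ _)) hx hcon
  have hxP := hE.subset hx
  rw [isFaceOf_iff ⟨x, hxP⟩] at hE
  obtain ⟨-, u, rfl⟩ := hE
  have hM : ∀ᶠ M : ℝ in Filter.atTop, ∀ s ∈ W, M * u s + a s ≤ M * u x + a x := by
    rw [Filter.eventually_all_finset]
    intro s hs
    have hsP : s ∈ convexHull ℝ (W : Set (Fin n → ℝ)) := subset_convexHull _ _ hs
    rcases (hx.2 s hsP).lt_or_eq with hlt | heq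
    · filter_upwards [Filter.eventually_ge_atTop ((a s - a x) / (u x - u s))] with M hM
      rw [div_le_iff₀ (by linarith)] at hM
      nlinarith
    · have : s ∈ maxFace (convexHull ℝ (W : Set (Fin n → ℝ))) u := by
        rw [maxFace_eq hx]; exact ⟨hsP, heq⟩
      exact Filter.Eventually.of_forall fun M => by rw [heq]; linarith [ha s this]
  obtain ⟨M, hM⟩ := hM.exists
  have hxM : x ∈ maxFace (convexHull ℝ (W : Set (Fin n → ℝ))) (M • u + a) := by
    refine ⟨hxP, fun p hp => le_of_mem_convexHull (W := (W : Set (Fin n → ℝ))) ?_ hp⟩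
    intro s hs
    simpa using hM s hs
  have h1 := hmin _ (isFaceOf_maxFace hxM) hxM hz
  rw [maxFace_eq hxM] at h1
  rw [maxFace_eq hx] at hz
  have := h1.2
  simp only [LinearMap.add_apply, LinearMap.smul_apply, smul_eq_mul, hz.2] at this
  linarith

/-- If `P` has finitely many faces, each of its points lies in a smallest face. -/
lemma exists_minimal_face {n : ℕ} {P : Set (Fin n → ℝ)}
    (hfin : {F : Set (Fin n → ℝ) | IsFaceOf P F}.Finite) {x : Fin n → ℝ} (hx : x ∈ P) :
    ∃ E, IsFaceOf P E ∧ x ∈ E ∧ ∀ F, IsFaceOf P F → x ∈ F → E ⊆ F := by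
  have hfin' : {F : Set (Fin n → ℝ) | IsFaceOf P F ∧ x ∈ F}.Finite :=
    hfin.subset fun F hF => hF.1
  obtain ⟨E, hE⟩ := hfin'.exists_minimal ⟨P, Or.inl rfl, hx⟩
  refine ⟨E, hE.prop.1, hE.prop.2, fun F hF hxF => ?_⟩
  have hEx := hE.prop.2
  obtain ⟨-, u, hu⟩ := (isFaceOf_iff ⟨x, hx⟩).1 hE.prop.1
  obtain ⟨-, w, rfl⟩ := (isFaceOf_iff ⟨x, hx⟩).1 hF
  subst hu
  -- the sum of the two functionals cuts out the intersection of the two faces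
  have hsum : x ∈ maxFace P (u + w) :=
    ⟨hx, fun p hp => by simpa using add_le_add (hEx.2 p hp) (hxF.2 p hp)⟩
  have hsub : ∀ z ∈ maxFace P (u + w), u z = u x ∧ w z = w x := by
    intro z hz
    rw [maxFace_eq hsum] at hz
    have h1 := hEx.2 z hz.1
    have h2 := hxF.2 z hz.1
    have h3 := hz.2
    simp only [LinearMap.add_apply] at h3
    exact ⟨by linarith, by linarith⟩
  have hle : maxFace P (u + w) ⊆ maxFace P u := fun z hz => by
    rw [maxFace_eq hEx]; exact ⟨hz.1, (hsub z hz).1⟩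
  intro z hz
  rw [maxFace_eq hxF]
  exact ⟨hz.1, (hsub z (hE.le_of_le ⟨isFaceOf_maxFace hsum, hsum⟩ hle hz)).2⟩

/-! ### The cone at a vertex of a simple polytope -/

lemma faceDim_eq_finrank_span {n : ℕ} {F : Set (Fin n → ℝ)} {v : Fin n → ℝ} (hv : v ∈ F) :
    faceDim F = Module.finrank ℝ (Submodule.span ℝ ((fun x => x - v) '' F)) := by
  rw [faceDim, direction_affineSpan, vectorSpan_eq_span_vsub_set_right ℝ hv]
  rfl

/-- At a vertex `v` lying on exactly `n` edges, the polytope is contained in the translate to `v`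
of the cone over a basis whose members are edge directions.

With `h` minimized over the polytope only at `v`, the section `h = 1` of the cone spanned by `P - v`
is a polytope. Its vertices span the cone, and each of them is the direction of an edge of `P`
at `v`; hence there are at most `n` of them and they form a basis. -/
lemma exists_edge_basis {n : ℕ} {T : Finset (Fin n → ℝ)} {v : Fin n → ℝ} (hv : v ∈ T)
    {h : (Fin n → ℝ) →ₗ[ℝ] ℝ} (hh : ∀ s ∈ T, s ≠ v → h v < h s)
    (hfull : affineSpan ℝ (convexHull ℝ (T : Set (Fin n → ℝ))) = ⊤)
    (hfin : {F : Set (Fin n → ℝ) | IsFaceOf (convexHull ℝ (T : Set (Fin n → ℝ))) F}.Finite)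
    (hcard : {E | IsFaceOf (convexHull ℝ (T : Set (Fin n → ℝ))) E ∧ faceDim E = 1 ∧
      {v} ⊆ E}.ncard = n) :
    ∃ (B : Finset (Fin n → ℝ)) (b : Module.Basis B ℝ (Fin n → ℝ)),
      (∀ x ∈ convexHull ℝ (T : Set (Fin n → ℝ)), ∀ i, 0 ≤ b.repr (x - v) i) ∧
      ∀ i, ∃ ε : ℝ, 0 < ε ∧ v + ε • b i ∈ convexHull ℝ (T : Set (Fin n → ℝ)) := by
  set P := convexHull ℝ (T : Set (Fin n → ℝ)) with hPdef
  have hvP : v ∈ P := subset_convexHull _ _ hv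
  let G : Finset (Fin n → ℝ) := (T.erase v).image fun s => (h s - h v)⁻¹ • (s - v)
  obtain ⟨B, hBG, hB, hBa⟩ := exists_exposed_generators G
  choose! a ha using hBa
  have hG1 : ∀ g ∈ G, h g = 1 := by
    intro g hg
    obtain ⟨s, hs, rfl⟩ := Finset.mem_image.1 hg
    rw [Finset.mem_erase] at hs
    have := hh s hs.2 hs.1
    rw [map_smul, map_sub, smul_eq_mul, inv_mul_cancel₀ (by linarith)]
  have hB1 : ∀ t ∈ B, h t = 1 := fun t ht => hG1 t (hBG ht)
  -- the cone at `v` is generated by `B`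
  have hcone : ∀ x ∈ P, ∃ c : (Fin n → ℝ) → ℝ, (∀ t ∈ B, 0 ≤ c t) ∧
      x - v = ∑ t ∈ B, c t • t := by
    have hgen : ∀ s ∈ T, ∃ c : (Fin n → ℝ) → ℝ, (∀ t ∈ B, 0 ≤ c t) ∧
        s - v = ∑ t ∈ B, c t • t := by
      intro s hs
      by_cases hsv : s = v
      · exact ⟨0, by simp, by simp [hsv]⟩
      · have hpos := hh s hs hsv
        have hg : (h s - h v)⁻¹ • (s - v) ∈ convexHull ℝ (B : Set (Fin n → ℝ)) := by
          rw [hB]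
          exact subset_convexHull _ _
            (Finset.mem_coe.2 (Finset.mem_image_of_mem _ (Finset.mem_erase.2 ⟨hsv, hs⟩)))
        rw [Finset.mem_convexHull'] at hg
        obtain ⟨w, hw0, -, hw⟩ := hg
        refine ⟨fun t => (h s - h v) * w t,
          fun t ht => mul_nonneg (by linarith) (hw0 t ht), ?_⟩
        simp_rw [mul_smul]
        rw [← Finset.smul_sum, hw, smul_inv_smul₀ (by linarith)]
    choose! c hc0 hc using hgen
    intro x hx
    rw [hPdef, Finset.mem_convexHull'] at hx
    obtain ⟨w, hw0, hw1, hw⟩ := hx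
    refine ⟨fun t => ∑ s ∈ T, w s * c s t,
      fun t ht => Finset.sum_nonneg fun s hs => mul_nonneg (hw0 s hs) (hc0 s hs t ht), ?_⟩
    simp_rw [Finset.sum_smul]
    rw [Finset.sum_comm]
    simp_rw [mul_smul, ← Finset.smul_sum]
    calc x - v = ∑ s ∈ T, w s • (s - v) := by
          simp_rw [smul_sub]
          rw [Finset.sum_sub_distrib, hw, ← Finset.sum_smul, hw1, one_smul]
      _ = _ := Finset.sum_congr rfl fun s hs => by rw [hc s hs]
  -- the functional `a t - a t t • h` vanishes at `t` and is negative on the rest of `B`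
  let U : (Fin n → ℝ) → (Fin n → ℝ) →ₗ[ℝ] ℝ := fun t => a t - a t t • h
  have hUt : ∀ t ∈ B, U t t = 0 := fun t ht => by simp [U, hB1 t ht]
  have hUneg : ∀ t ∈ B, ∀ t' ∈ B, t' ≠ t → U t t' < 0 := fun t ht t' ht' hne => by
    simpa [U, hB1 t' ht'] using ha t ht t' ht' hne
  have hUnonpos : ∀ t ∈ B, ∀ t' ∈ B, U t t' ≤ 0 := fun t ht t' ht' => by
    by_cases hne : t' = t
    · rw [hne, hUt t ht]
    · exact (hUneg t ht t' ht' hne).le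
  have hvU : ∀ t ∈ B, v ∈ maxFace P (U t) := by
    intro t ht
    refine ⟨hvP, fun p hp => ?_⟩
    obtain ⟨c, hc0, hc⟩ := hcone p hp
    rw [← sub_nonpos, ← map_sub, hc, map_sum]
    refine Finset.sum_nonpos fun t' ht' => ?_
    rw [map_smul, smul_eq_mul]
    exact mul_nonpos_of_nonneg_of_nonpos (hc0 t' ht') (hUnonpos t ht t' ht')
  have hray : ∀ t ∈ B, ∀ x ∈ maxFace P (U t), ∃ c : ℝ, x - v = c • t := by
    intro t ht x hx
    rw [maxFace_eq (hvU t ht)] at hx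
    obtain ⟨c, hc0, hc⟩ := hcone x hx.1
    refine ⟨c t, ?_⟩
    have h0 : ∑ t' ∈ B, c t' * U t t' = 0 := by
      have : U t (x - v) = 0 := by rw [map_sub, hx.2, sub_self]
      rw [hc, map_sum] at this
      simpa using this
    rw [Finset.sum_eq_zero_iff_of_nonpos fun t' ht' =>
      mul_nonpos_of_nonneg_of_nonpos (hc0 t' ht') (hUnonpos t ht t' ht')] at h0
    rw [hc]
    refine Finset.sum_eq_single_of_mem t ht fun t' ht' hne => ?_
    rcases mul_eq_zero.1 (h0 t' ht') with h1 | h1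
    · rw [h1, zero_smul]
    · exact absurd h1 (hUneg t ht t' ht' hne).ne
  have hstep : ∀ t ∈ B, ∃ ε : ℝ, 0 < ε ∧ v + ε • t ∈ maxFace P (U t) := by
    intro t ht
    obtain ⟨s, hs, hst⟩ := Finset.mem_image.1 (hBG ht)
    rw [Finset.mem_erase] at hs
    have hpos := hh s hs.2 hs.1
    refine ⟨h s - h v, by linarith, ?_⟩
    have : v + (h s - h v) • t = s := by
      rw [← hst, smul_inv_smul₀ (by linarith)]; abel
    rw [maxFace_eq (hvU t ht)]
    refine ⟨by rw [this]; exact subset_convexHull _ _ hs.2, ?_⟩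
    rw [map_add, map_smul, hUt t ht]; simp
  have hne0 : ∀ t ∈ B, t ≠ 0 := fun t ht h0 => by
    have := hB1 t ht
    rw [h0, map_zero] at this
    exact zero_ne_one this
  have hdim : ∀ t ∈ B, faceDim (maxFace P (U t)) = 1 := by
    intro t ht
    rw [faceDim_eq_finrank_span (hvU t ht), ← finrank_span_singleton (K := ℝ) (hne0 t ht)]
    suffices hs : Submodule.span ℝ ((fun x => x - v) '' maxFace P (U t)) =
        Submodule.span ℝ {t} by rw [hs]
    apply le_antisymm
    · rw [Submodule.span_le]
      rintro _ ⟨x, hx, rfl⟩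
      obtain ⟨c, hc⟩ := hray t ht x hx
      simp only [hc]
      exact Submodule.smul_mem _ _ (Submodule.mem_span_singleton_self t)
    · rw [Submodule.span_singleton_le_iff_mem]
      obtain ⟨ε, hε, hmem⟩ := hstep t ht
      have : ε • t ∈ Submodule.span ℝ ((fun x => x - v) '' maxFace P (U t)) :=
        Submodule.subset_span ⟨_, hmem, by simp⟩
      simpa [smul_smul, inv_mul_cancel₀ hε.ne'] using Submodule.smul_mem _ ε⁻¹ this
  have hinj : Set.InjOn (fun t => maxFace P (U t)) (B : Set (Fin n → ℝ)) := by
    intro t ht t' ht' heq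
    obtain ⟨ε, hε, hmem⟩ := hstep t ht
    simp only at heq
    rw [heq] at hmem
    obtain ⟨c, hc⟩ := hray t' ht' _ hmem
    rw [add_sub_cancel_left] at hc
    have h1 := congrArg h hc
    rw [map_smul, map_smul, hB1 t ht, hB1 t' ht'] at h1
    simp only [smul_eq_mul, mul_one] at h1
    rw [← h1] at hc
    exact smul_right_injective _ hε.ne' hc
  have hBcard : B.card ≤ n := by
    refine le_of_le_of_eq ?_ hcard
    rw [← Set.ncard_coe_finset, ← hinj.ncard_image]
    refine Set.ncard_le_ncard ?_ (hfin.subset fun E hE => hE.1)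
    rintro _ ⟨t, ht, rfl⟩
    exact ⟨isFaceOf_maxFace (hvU t ht), hdim t ht, Set.singleton_subset_iff.2 (hvU t ht)⟩
  have hspan : ⊤ ≤ Submodule.span ℝ (Set.range fun t : B => (t : Fin n → ℝ)) := by
    have h1 : vectorSpan ℝ P = ⊤ := by
      rw [← direction_affineSpan, hfull, AffineSubspace.direction_top]
    rw [← h1, vectorSpan_eq_span_vsub_set_right ℝ hvP, Submodule.span_le]
    rintro _ ⟨x, hx, rfl⟩
    obtain ⟨c, -, hc⟩ := hcone x hx
    simp only [vsub_eq_sub, hc]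
    exact Submodule.sum_mem _ fun t ht =>
      Submodule.smul_mem _ _ (Submodule.subset_span ⟨⟨t, ht⟩, rfl⟩)
  have hli : LinearIndependent ℝ (fun t : B => (t : Fin n → ℝ)) :=
    linearIndependent_of_top_le_span_of_card_le_finrank hspan (by simpa using hBcard)
  refine ⟨B, Module.Basis.mk hli hspan, fun x hx i => ?_, fun i => ?_⟩
  · obtain ⟨c, hc0, hc⟩ := hcone x hx
    have : x - v = ∑ t : B, c t • Module.Basis.mk hli hspan t := by
      rw [hc, ← Finset.sum_coe_sort]
      simp
    rw [this, Module.Basis.repr_sum_self]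
    exact hc0 i i.2
  · obtain ⟨ε, hε, hmem⟩ := hstep i i.2
    exact ⟨ε, hε, by simpa using hmem.1⟩

/-! ### Faces through a vertex of a simple polytope -/

/-- The points of `P` whose coordinates outside `I`, relative to the origin `v` and the basis `b`,
vanish. -/
def coordFace {n : ℕ} {ι : Type*} (P : Set (Fin n → ℝ)) (v : Fin n → ℝ)
    (b : Module.Basis ι ℝ (Fin n → ℝ)) (I : Finset ι) : Set (Fin n → ℝ) :=
  {x | x ∈ P ∧ ∀ i ∉ I, b.repr (x - v) i = 0}

section coordFace

variable {n : ℕ} {ι : Type*} {P : Set (Fin n → ℝ)} {v : Fin n → ℝ}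
  {b : Module.Basis ι ℝ (Fin n → ℝ)}

lemma mem_coordFace (hv : v ∈ P) (I : Finset ι) : v ∈ coordFace P v b I :=
  ⟨hv, by simp⟩

lemma add_smul_mem_coordFace {i : ι} {ε : ℝ} (h : v + ε • b i ∈ P) (hε : 0 < ε) (I : Finset ι) :
    v + ε • b i ∈ coordFace P v b I ↔ i ∈ I := by
  constructor
  · intro hx
    by_contra hi
    have := hx.2 i hi
    simp [hε.ne'] at this
  · intro hi
    refine ⟨h, fun j hj => ?_⟩
    have : i ≠ j := fun hij => hj (hij ▸ hi)
    simp [this]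

lemma coordFace_subset_iff (hb : ∀ i, ∃ ε : ℝ, 0 < ε ∧ v + ε • b i ∈ P) {I J : Finset ι} :
    coordFace P v b I ⊆ coordFace P v b J ↔ I ⊆ J := by
  constructor
  · intro h i hi
    obtain ⟨ε, hε, hmem⟩ := hb i
    exact (add_smul_mem_coordFace hmem hε J).1 (h ((add_smul_mem_coordFace hmem hε I).2 hi))
  · exact fun h x hx => ⟨hx.1, fun i hi => hx.2 i fun hi' => hi (h hi')⟩

variable [Fintype ι]

lemma isFaceOf_coordFace (hv : v ∈ P) (hpos : ∀ x ∈ P, ∀ i, 0 ≤ b.repr (x - v) i)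
    (I : Finset ι) : IsFaceOf P (coordFace P v b I) := by
  -- the face is cut out by minus the sum of the coordinates outside `I`
  let u : (Fin n → ℝ) →ₗ[ℝ] ℝ := -∑ i ∈ Iᶜ, b.coord i
  have hu : ∀ x, u x - u v = -∑ i ∈ Iᶜ, b.repr (x - v) i := fun x => by
    rw [← map_sub]; simp [u]
  have hvu : v ∈ maxFace P u := ⟨hv, fun p hp => by
    rw [← sub_nonpos, hu, neg_nonpos]
    exact Finset.sum_nonneg fun i _ => hpos p hp i⟩
  have : coordFace P v b I = maxFace P u := by
    rw [maxFace_eq hvu]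
    ext x
    refine and_congr_right fun hx => ?_
    rw [← sub_eq_zero (a := u x), hu, neg_eq_zero,
      Finset.sum_eq_zero_iff_of_nonneg fun i _ => hpos x hx i]
    simp
  rw [this]
  exact isFaceOf_maxFace hvu

lemma exists_eq_coordFace (hv : v ∈ P) (hpos : ∀ x ∈ P, ∀ i, 0 ≤ b.repr (x - v) i)
    (hb : ∀ i, ∃ ε : ℝ, 0 < ε ∧ v + ε • b i ∈ P) {F : Set (Fin n → ℝ)} (hF : IsFaceOf P F)
    (hvF : v ∈ F) : ∃ I, F = coordFace P v b I := by
  obtain ⟨-, u, rfl⟩ := (isFaceOf_iff ⟨v, hv⟩).1 hF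
  have hu : ∀ i, u (b i) ≤ 0 := fun i => by
    obtain ⟨ε, hε, hmem⟩ := hb i
    have := hvF.2 _ hmem
    rw [map_add, map_smul, smul_eq_mul] at this
    nlinarith
  refine ⟨Finset.univ.filter fun i => u (b i) = 0, ?_⟩
  rw [maxFace_eq hvF]
  ext x
  refine and_congr_right fun hx => ?_
  have hsum : u x - u v = ∑ i, b.repr (x - v) i * u (b i) := by
    rw [← map_sub]
    conv_lhs => rw [← b.sum_repr (x - v)]
    simp
  rw [← sub_eq_zero (a := u x), hsum, Finset.sum_eq_zero_iff_of_nonpos fun i _ =>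
    mul_nonpos_of_nonneg_of_nonpos (hpos x hx i) (hu i)]
  simp only [Finset.mem_univ, true_implies, mul_eq_zero, Finset.mem_filter, true_and]
  exact forall_congr' fun i => by tauto

lemma faceDim_coordFace (hv : v ∈ P) (hb : ∀ i, ∃ ε : ℝ, 0 < ε ∧ v + ε • b i ∈ P)
    (I : Finset ι) : faceDim (coordFace P v b I) = I.card := by
  rw [faceDim_eq_finrank_span (mem_coordFace hv I)]
  have hspan : Submodule.span ℝ ((fun x => x - v) '' coordFace P v b I) =
      Submodule.span ℝ (Set.range fun i : I => b i) := by
    apply le_antisymm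
    · rw [Submodule.span_le]
      rintro _ ⟨x, hx, rfl⟩
      simp only
      rw [← b.sum_repr (x - v)]
      refine Submodule.sum_mem _ fun i _ => ?_
      by_cases hi : i ∈ I
      · exact Submodule.smul_mem _ _ (Submodule.subset_span ⟨⟨i, hi⟩, rfl⟩)
      · rw [hx.2 i hi, zero_smul]
        exact Submodule.zero_mem _
    · rw [Submodule.span_le]
      rintro _ ⟨i, rfl⟩
      obtain ⟨ε, hε, hmem⟩ := hb i
      have : ε • b i ∈ Submodule.span ℝ ((fun x => x - v) '' coordFace P v b I) :=
        Submodule.subset_span ⟨_, (add_smul_mem_coordFace hmem hε I).2 i.2, by simp⟩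
      simpa [smul_smul, inv_mul_cancel₀ hε.ne'] using Submodule.smul_mem _ ε⁻¹ this
  have hli : LinearIndependent ℝ fun i : I => b i :=
    b.linearIndependent.comp _ Subtype.val_injective
  rw [hspan, finrank_span_eq_card hli, Fintype.card_coe]

/-- A face `E` through `v` is `coordFace P v b I` for some `I`, and the faces containing it correspond
to the sets containing `I`, so the binomial theorem evaluates their weighted count. -/
lemma sum_faces_above (hv : v ∈ P) (hpos : ∀ x ∈ P, ∀ i, 0 ≤ b.repr (x - v) i)
    (hb : ∀ i, ∃ ε : ℝ, 0 < ε ∧ v + ε • b i ∈ P)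
    (hfin : {F : Set (Fin n → ℝ) | IsFaceOf P F}.Finite) {E : Set (Fin n → ℝ)}
    (hE : IsFaceOf P E) (hvE : v ∈ E) (y : ℂ) :
    ∑ F ∈ hfin.toFinset with E ⊆ F, (y + 1) ^ faceDim F * (-y) ^ (n - faceDim F) =
      (y + 1) ^ faceDim E := by
  obtain ⟨I, rfl⟩ := exists_eq_coordFace hv hpos hb hE hvE
  have hn : Fintype.card ι = n := by
    rw [← Module.finrank_eq_card_basis b]; simp
  have hIc : (Iᶜ).card + I.card = n := by
    rw [← hn, Finset.card_compl_add_card]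
  have hbin := Finset.sum_pow_mul_eq_add_pow (y + 1) (-y) Iᶜ
  rw [show y + 1 + -y = 1 by ring, one_pow] at hbin
  rw [faceDim_coordFace hv hb]
  trans ∑ J ∈ (Iᶜ).powerset, (y + 1) ^ I.card * ((y + 1) ^ J.card * (-y) ^ ((Iᶜ).card - J.card))
  · symm
    refine Finset.sum_bij (fun J _ => coordFace P v b (I ∪ J)) ?_ ?_ ?_ ?_
    · intro J hJ
      simp only [Finset.mem_filter, Set.Finite.mem_toFinset, Set.mem_ofPred_eq]
      exact ⟨isFaceOf_coordFace hv hpos _,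
        (coordFace_subset_iff hb).2 Finset.subset_union_left⟩
    · intro J hJ K hK heq
      have h1 := (coordFace_subset_iff hb).1 heq.subset
      have h2 := (coordFace_subset_iff hb).1 heq.superset
      rw [Finset.mem_powerset] at hJ hK
      ext i
      have h1i := @h1 i
      have h2i := @h2 i
      have hJi := @hJ i
      have hKi := @hK i
      simp only [Finset.mem_union, Finset.mem_compl] at h1i h2i hJi hKi
      tauto
    · intro F hF
      simp only [Finset.mem_filter, Set.Finite.mem_toFinset, Set.mem_ofPred_eq] at hF
      obtain ⟨K, rfl⟩ := exists_eq_coordFace hv hpos hb hF.1 (hF.2 hvE)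
      have hIK := (coordFace_subset_iff hb).1 hF.2
      refine ⟨K \ I, ?_, ?_⟩
      · rw [Finset.mem_powerset]
        intro i hi
        simp only [Finset.mem_sdiff, Finset.mem_compl] at hi ⊢
        exact hi.2
      · simp only [Finset.union_sdiff_of_subset hIK]
    · intro J hJ
      rw [Finset.mem_powerset] at hJ
      have hdisj : Disjoint I J := by
        rw [Finset.disjoint_left]
        exact fun i hi hi' => Finset.mem_compl.1 (hJ hi') hi
      rw [faceDim_coordFace hv hb, Finset.card_union_of_disjoint hdisj, pow_add, mul_assoc]
      have hsub : (Iᶜ).card - J.card = n - (I.card + J.card) := by omega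
      rw [hsub]
  · rw [← Finset.mul_sum, hbin, mul_one]

end coordFace

/-! ### Assembling the identity -/

/-- The contribution of a single point `x` of the polytope to both sides. The faces containing `x`
are those containing its minimal face, and the minimal face is the only one having `x` in its
relative interior. -/
lemma sum_faces_at_point {n : ℕ} {W : Finset (Fin n → ℝ)} {P : Set (Fin n → ℝ)}
    (hP : P = convexHull ℝ (W : Set (Fin n → ℝ)))
    (hfull : affineSpan ℝ P = ⊤) (hsimple : IsSimple P)
    (hfin : {F : Set (Fin n → ℝ) | IsFaceOf P F}.Finite) {x : Fin n → ℝ} (hx : x ∈ P) (y : ℂ) :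
    ∑ F ∈ hfin.toFinset with x ∈ F, (y + 1) ^ faceDim F * (-y) ^ (n - faceDim F) =
      ∑ F ∈ hfin.toFinset with x ∈ intrinsicInterior ℝ F, (y + 1) ^ faceDim F := by
  obtain ⟨E, hE, hxE, hmin⟩ := exists_minimal_face hfin hx
  have hleft : hfin.toFinset.filter (fun F => x ∈ F) =
      hfin.toFinset.filter (fun F => E ⊆ F) := by
    refine Finset.filter_congr fun F hF => ?_
    rw [Set.Finite.mem_toFinset] at hF
    exact ⟨hmin F hF, fun h => h hxE⟩
  have hright : hfin.toFinset.filter (fun F => x ∈ intrinsicInterior ℝ F) = {E} := by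
    ext F
    simp only [Finset.mem_filter, Set.Finite.mem_toFinset, Set.mem_ofPred_eq,
      Finset.mem_singleton]
    constructor
    · rintro ⟨hF, hxF⟩
      refine subset_antisymm ?_ (hmin F hF (intrinsicInterior_subset hxF))
      obtain ⟨-, u, rfl⟩ := (isFaceOf_iff ⟨x, hx⟩).1 hE
      intro z hz
      rw [maxFace_eq hxE]
      exact ⟨hF.subset hz,
        eq_of_mem_intrinsicInterior hxF hz fun p hp => hxE.2 p (hF.subset hp)⟩
    · rintro rfl
      refine ⟨hE, ?_⟩
      subst hP
      exact mem_intrinsicInterior_of_minimal hE hxE hmin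
  rw [hleft, hright, Finset.sum_singleton]
  subst hP
  obtain ⟨T, hT, v, hvT, hvE, h, hh⟩ := exists_vertex_mem_face hE ⟨x, hxE⟩
  rw [← hT] at hE hx hmin hsimple hfull
  have hfin' := hfin
  rw [← hT] at hfin'
  have hvP : v ∈ convexHull ℝ (T : Set (Fin n → ℝ)) := subset_convexHull _ _ hvT
  have hmax : v ∈ maxFace (convexHull ℝ (T : Set (Fin n → ℝ))) (-h) := by
    refine ⟨hvP, fun p hp => le_of_mem_convexHull (W := (T : Set (Fin n → ℝ))) ?_ hp⟩
    intro s hs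
    by_cases hsv : s = v
    · rw [hsv]
    · simpa using (hh s hs hsv).le
  have hvert : maxFace (convexHull ℝ (T : Set (Fin n → ℝ))) (-h) = {v} := by
    refine subset_antisymm ?_ (Set.singleton_subset_iff.2 hmax)
    intro z hz
    rw [maxFace_eq hmax] at hz
    have hzT := hz.1
    rw [Finset.mem_convexHull'] at hzT
    obtain ⟨w, hw0, hw1, hw⟩ := hzT
    -- writing `z` as a convex combination, only the weight of `v` can be nonzero
    have h0 : ∑ s ∈ T, w s * (h s - h v) = 0 := by
      have : h z = h v := by simpa using hz.2
      simp_rw [mul_sub]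
      rw [Finset.sum_sub_distrib, ← Finset.sum_mul, hw1, one_mul, sub_eq_zero, ← this, ← hw,
        map_sum]
      simp
    have hnn : ∀ s ∈ T, 0 ≤ w s * (h s - h v) := fun s hs => by
      by_cases hsv : s = v
      · simp [hsv]
      · exact mul_nonneg (hw0 s hs) (by linarith [hh s hs hsv])
    rw [Finset.sum_eq_zero_iff_of_nonneg hnn] at h0
    have hws : ∀ s ∈ T, s ≠ v → w s = 0 := fun s hs hsv => by
      rcases mul_eq_zero.1 (h0 s hs) with h1 | h1
      · exact h1
      · linarith [hh s hs hsv]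
    rw [Finset.sum_eq_single_of_mem v hvT hws] at hw1
    rw [Finset.sum_eq_single_of_mem v hvT fun s hs hsv => by rw [hws s hs hsv, zero_smul], hw1,
      one_smul] at hw
    exact hw.symm
  have hface : IsFaceOf (convexHull ℝ (T : Set (Fin n → ℝ))) {v} :=
    hvert ▸ isFaceOf_maxFace hmax
  have hcard := hsimple {v} hface (by
    rw [faceDim, direction_affineSpan, vectorSpan_singleton, finrank_bot])
  obtain ⟨B, b, hpos, hb⟩ := exists_edge_basis hvT hh hfull hfin' hcard
  have := sum_faces_above hvP hpos hb hfin' hE hvE y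
  convert this using 3
  ext F
  simp [hT]

lemma mem_natCast_smul_iff {n : ℕ} {q : ℕ} (hq : 0 < q) (F : Set (Fin n → ℝ)) (x : Fin n → ℝ) :
    x ∈ (q : ℝ) • F ↔ (q : ℝ)⁻¹ • x ∈ F :=
  Set.mem_smul_set_iff_inv_smul_mem₀ (by positivity) F x

lemma intrinsicInterior_smul {n : ℕ} {c : ℝ} (hc : c ≠ 0) (F : Set (Fin n → ℝ)) :
    intrinsicInterior ℝ (c • F) = c • intrinsicInterior ℝ F :=
  (LinearEquiv.smulOfNeZero ℝ (Fin n → ℝ) c hc).toAffineEquiv.intrinsicInterior_image F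

lemma finite_intVec_mem {n : ℕ} {K : Set (Fin n → ℝ)} (hK : Bornology.IsBounded K) :
    {m : Fin n → ℤ | intVec m ∈ K}.Finite := by
  obtain ⟨R, hR⟩ := hK.exists_norm_le
  refine (Set.finite_Icc (fun _ : Fin n => -⌈R⌉) (fun _ => ⌈R⌉)).subset fun m hm => ?_
  have h : ∀ i, |(m i : ℝ)| ≤ ⌈R⌉ := fun i =>
    ((norm_le_pi_norm (intVec m) i).trans (hR _ hm)).trans (Int.le_ceil R)
  constructor <;> intro i
  · exact_mod_cast (abs_le.1 (h i)).1
  · exact_mod_cast (abs_le.1 (h i)).2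

/-- For a full-dimensional simple lattice polytope `P ⊂ ℝ^n`,
a homogeneous polynomial `φ` of degree `d`, an integer `q > 0` and `y ∈ ℝ`:
`∑_F (y+1)^{dim F} (-y)^{n-dim F} ∑_{m ∈ ℤ^n ∩ qF} φ(m)
  = ∑_F (y+1)^{dim F} ∑_{m ∈ ℤ^n ∩ relint(qF)} φ(m)`. -/
theorem stmt10 (n d : ℕ) (P : Set (Fin n → ℝ))
    (S : Finset (Fin n → ℤ))
    (hP : P = convexHull ℝ (intVec '' (S : Set (Fin n → ℤ))))
    (hfull : affineSpan ℝ P = ⊤) (hsimple : IsSimple P)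
    (φ : (Fin n → ℝ) → ℂ) (p : MvPolynomial (Fin n) ℂ) (hp : p.IsHomogeneous d)
    (hφ : ∀ x, φ x = MvPolynomial.eval (fun i => (x i : ℂ)) p)
    (hfin : {F : Set (Fin n → ℝ) | IsFaceOf P F}.Finite)
    (q : ℕ) (hq : 0 < q) (y : ℝ) :
    ∑ F ∈ hfin.toFinset, ((y : ℂ) + 1) ^ faceDim F * (-(y : ℂ)) ^ (n - faceDim F) *
        ∑ᶠ m ∈ {m : Fin n → ℤ | intVec m ∈ (q : ℝ) • F}, φ (intVec m)
      = ∑ F ∈ hfin.toFinset, ((y : ℂ) + 1) ^ faceDim F *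
          ∑ᶠ m ∈ {m : Fin n → ℤ | intVec m ∈ intrinsicInterior ℝ ((q : ℝ) • F)},
            φ (intVec m) := by
  have hqR : (q : ℝ) ≠ 0 := by positivity
  have hPW : P = convexHull ℝ ((S.image intVec : Finset (Fin n → ℝ)) : Set (Fin n → ℝ)) := by
    rw [hP, Finset.coe_image]
  have hbdd : Bornology.IsBounded ((q : ℝ) • P) := by
    refine Bornology.IsBounded.smul₀ ?_ _
    rw [hPW]
    exact ((S.image intVec).finite_toSet.isCompact_convexHull ℝ).isBounded
  -- all lattice sums range over subsets of the finite set of lattice points of `q • P`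
  let A := (finite_intVec_mem hbdd).toFinset
  have hfs : ∀ K : Set (Fin n → ℝ), K ⊆ P →
      ∑ᶠ m ∈ {m : Fin n → ℤ | intVec m ∈ (q : ℝ) • K}, φ (intVec m) =
        ∑ m ∈ A, if (q : ℝ)⁻¹ • intVec m ∈ K then φ (intVec m) else 0 := by
    intro K hK
    have hKfin : {m : Fin n → ℤ | intVec m ∈ (q : ℝ) • K}.Finite :=
      finite_intVec_mem (hbdd.subset (Set.smul_set_mono hK))
    rw [← Finset.sum_filter, finsum_mem_eq_finite_toFinset_sum _ hKfin]
    refine Finset.sum_congr ?_ fun _ _ => rfl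
    ext m
    rw [Set.Finite.mem_toFinset, Finset.mem_filter, Set.Finite.mem_toFinset, Set.mem_ofPred_eq,
      Set.mem_ofPred_eq, mem_natCast_smul_iff hq, mem_natCast_smul_iff hq]
    exact ⟨fun h => ⟨hK h, h⟩, fun h => h.2⟩
  have hface : ∀ F ∈ hfin.toFinset, F ⊆ P := fun F hF =>
    IsFaceOf.subset (hfin.mem_toFinset.1 hF : IsFaceOf P F)
  trans ∑ m ∈ A, φ (intVec m) * ∑ F ∈ hfin.toFinset with (q : ℝ)⁻¹ • intVec m ∈ F,
      ((y : ℂ) + 1) ^ faceDim F * (-(y : ℂ)) ^ (n - faceDim F)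
  · simp_rw [Finset.sum_filter, Finset.mul_sum]
    rw [Finset.sum_comm]
    refine Finset.sum_congr rfl fun F hF => ?_
    rw [hfs F (hface F hF), Finset.mul_sum]
    refine Finset.sum_congr rfl fun m _ => ?_
    split_ifs <;> ring
  trans ∑ m ∈ A, φ (intVec m) * ∑ F ∈ hfin.toFinset with
      (q : ℝ)⁻¹ • intVec m ∈ intrinsicInterior ℝ F, ((y : ℂ) + 1) ^ faceDim F
  · refine Finset.sum_congr rfl fun m hm => ?_
    have hm' : (q : ℝ)⁻¹ • intVec m ∈ P := by
      rw [← mem_natCast_smul_iff hq]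
      exact (finite_intVec_mem hbdd).mem_toFinset.1 hm
    rw [sum_faces_at_point hPW hfull hsimple hfin hm' y]
  · simp_rw [Finset.sum_filter, Finset.mul_sum]
    rw [Finset.sum_comm]
    refine Finset.sum_congr rfl fun F hF => ?_
    rw [intrinsicInterior_smul hqR, hfs _ (intrinsicInterior_subset.trans (hface F hF)),
      Finset.mul_sum]
    refine Finset.sum_congr rfl fun m _ => ?_
    split_ifs <;> ring
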